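/- (Proposition 1(b).) Suppose K satisfies assumption (C_K), is continuous, has support equal to [−a, a] for some a > 0, is concave on [−a, a], and attains its maximum at a unique point. Then the function δ ↦ C(δ) is nondecreasing on (0, ∞). -/

import Mathlib

open MeasureTheory

/-- `ν₀₂ = ∫ K(s)² ds`. -/
noncomputable def nu02 (K : ℝ → ℝ) : ℝ := ∫ s, K s ^ 2

/-- `C(a, δ) = ∫ K(t − aδ) K(t + aδ) dt`. -/
noncomputable def Cab (K : ℝ → ℝ) (a δ : ℝ) : ℝ := ∫ t, K (t - a * δ) * K (t + a * δ)

/-- `C(δ) = (3/2) C(0,δ) − 2 C(1/2,δ) + (1/2) C(1,δ)`. -/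
noncomputable def Cfun (K : ℝ → ℝ) (δ : ℝ) : ℝ :=
  (3 / 2) * Cab K 0 δ - 2 * Cab K (1 / 2) δ + (1 / 2) * Cab K 1 δ

/-- Assumption (C_K): `K` is a symmetric probability density with compact support. -/
def AssumptionCK (K : ℝ → ℝ) : Prop :=
  Measurable K ∧ (∀ u, 0 ≤ K u) ∧ (∫ u, K u) = 1 ∧ (∀ u, K (-u) = K u) ∧ HasCompactSupport K

/-!
If `A` is the autocorrelation of `K`, then `C(δ) = 3/2 A(0) - 2 A(δ) + 1/2 A(2δ)`, so
`4 A(δ) - A(2δ)` has to be nonincreasing. By the layer cake formula, `A(s)` is the integral over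
heights `y`, `z` of the length of `{K > y} ∩ ({K > z} - s)`, where both superlevel sets are
intervals and the one at the greater height lies inside the other. For `y < z` write `z = y + h`.
Replacing `h` by `2h` in `A(2s)` costs a factor `2`, so it is enough that, for fixed `y` and `h`,
`2 |{K > y} ∩ ({K > y + h} - s)| - |{K > y} ∩ ({K > y + 2h} - 2s)|` does not increase as `s` moves
away from `0`. The lengths are truncated affine functions of `s`, and the truncations compare in
the right order because, by concavity, `{K > y + h}` contains all midpoints of points of `{K > y}`
and `{K > y + 2h}`.
-/

open Set
open scoped ENNReal

section Lebesgue

theorem lintegral_ofReal_mul_ofReal_eq_lintegral_meas_lt {α : Type*} [MeasurableSpace α]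
    {μ : Measure α} {f g : α → ℝ} (hf₀ : ∀ x, 0 ≤ f x) (hg₀ : ∀ x, 0 ≤ g x)
    (hf : Measurable f) (hg : Measurable g) :
    ∫⁻ x, ENNReal.ofReal (f x) * ENNReal.ofReal (g x) ∂μ =
      ∫⁻ y in Ioi (0 : ℝ), ∫⁻ z in Ioi (0 : ℝ), μ {x | y < f x ∧ z < g x} := by
  have hlevel (y : ℝ) : MeasurableSet {x | y < f x} := measurableSet_lt measurable_const hf
  calc ∫⁻ x, ENNReal.ofReal (f x) * ENNReal.ofReal (g x) ∂μ
    _ = ∫⁻ x, ENNReal.ofReal (f x) ∂μ.withDensity (fun x ↦ ENNReal.ofReal (g x)) := by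
      rw [lintegral_withDensity_eq_lintegral_mul _ hg.ennreal_ofReal hf.ennreal_ofReal]
      simp only [Pi.mul_apply, mul_comm]
    _ = ∫⁻ y in Ioi (0 : ℝ), ∫⁻ x in {x | y < f x}, ENNReal.ofReal (g x) ∂μ := by
      rw [lintegral_eq_lintegral_meas_lt _ (.of_forall hf₀) hf.aemeasurable]
      simp only [withDensity_apply _ (hlevel _)]
    _ = ∫⁻ y in Ioi (0 : ℝ), ∫⁻ z in Ioi (0 : ℝ), μ {x | y < f x ∧ z < g x} := by
      refine lintegral_congr fun y ↦ ?_
      rw [lintegral_eq_lintegral_meas_lt _ (.of_forall hg₀) hg.aemeasurable]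
      refine lintegral_congr fun z ↦ ?_
      rw [Measure.restrict_apply' (hlevel y)]
      congr 1
      ext x
      exact and_comm

theorem setLIntegral_Ioi_eq_setLIntegral_Ioi_zero_add (f : ℝ → ℝ≥0∞) (a : ℝ) :
    ∫⁻ x in Ioi a, f x = ∫⁻ x in Ioi (0 : ℝ), f (a + x) := by
  rw [← (measurePreserving_add_left volume a).setLIntegral_comp_preimage_emb
    (measurableEmbedding_addLeft a) f]
  simp

theorem setLIntegral_Ioi_zero_eq_mul_comp_mul_left (f : ℝ → ℝ≥0∞) {c : ℝ} (hc : 0 < c) :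
    ∫⁻ x in Ioi (0 : ℝ), f x = ENNReal.ofReal c * ∫⁻ x in Ioi (0 : ℝ), f (c * x) := by
  have hemb : MeasurableEmbedding (c * · : ℝ → ℝ) := measurableEmbedding_mulLeft₀ hc.ne'
  have hpre : (c * · : ℝ → ℝ) ⁻¹' Ioi 0 = Ioi 0 := by ext x; simp [hc]
  conv_lhs => rw [← Real.smul_map_volume_mul_left hc.ne']
  rw [Measure.restrict_smul, lintegral_smul_measure, abs_of_pos hc, smul_eq_mul,
    hemb.restrict_map, hemb.lintegral_map, hpre]

theorem lintegral_lintegral_Ioi_zero_eq_add_swap {F : ℝ → ℝ → ℝ≥0∞}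
    (hF : Measurable (Function.uncurry F)) :
    ∫⁻ y in Ioi (0 : ℝ), ∫⁻ z in Ioi (0 : ℝ), F y z =
      (∫⁻ y in Ioi (0 : ℝ), ∫⁻ h in Ioi (0 : ℝ), F y (y + h)) +
        ∫⁻ y in Ioi (0 : ℝ), ∫⁻ h in Ioi (0 : ℝ), F (y + h) y := by
  have habove : Measurable (Function.uncurry fun y ↦ (Ioi y).indicator (F y)) :=
    hF.indicator (measurableSet_lt measurable_fst measurable_snd)
  have hbelow : Measurable (Function.uncurry fun y ↦ (Iic y).indicator (F y)) :=
    hF.indicator (measurableSet_le measurable_snd measurable_fst)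
  have hsplit (y z : ℝ) : F y z = (Ioi y).indicator (F y) z + (Iic y).indicator (F y) z := by
    rw [← compl_Ioi, indicator_self_add_compl_apply]
  have hflip (y z : ℝ) : (Iic y).indicator (F y) z = (Ici z).indicator (F · z) y := rfl
  have hsum : ∫⁻ y in Ioi (0 : ℝ), ∫⁻ z in Ioi (0 : ℝ), F y z =
      (∫⁻ y in Ioi (0 : ℝ), ∫⁻ z in Ioi (0 : ℝ), (Ioi y).indicator (F y) z) +
        ∫⁻ y in Ioi (0 : ℝ), ∫⁻ z in Ioi (0 : ℝ), (Iic y).indicator (F y) z := by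
    rw [← lintegral_add_left habove.lintegral_prod_right]
    refine lintegral_congr fun y ↦ ?_
    rw [← lintegral_add_left habove.of_uncurry_left, lintegral_congr (hsplit y)]
  rw [hsum, lintegral_lintegral_swap hbelow.aemeasurable]
  simp_rw [hflip]
  congr 1 <;> refine setLIntegral_congr_fun measurableSet_Ioi fun y (hy : 0 < y) ↦ ?_
  · rw [setLIntegral_indicator measurableSet_Ioi, Ioi_inter_Ioi, max_eq_left hy.le,
      setLIntegral_Ioi_eq_setLIntegral_Ioi_zero_add]
  · rw [setLIntegral_indicator measurableSet_Ici,
      inter_eq_left.2 (Ici_subset_Ioi.2 hy), ← restrict_Ioi_eq_restrict_Ici,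
      setLIntegral_Ioi_eq_setLIntegral_Ioi_zero_add]

end Lebesgue

section Interval

theorem ae_eq_Ioo_csInf_csSup_of_convex {s : Set ℝ} (hs : Convex ℝ s) (hne : s.Nonempty)
    (hbdd : Bornology.IsBounded s) : s =ᵐ[volume] Ioo (sInf s) (sSup s) := by
  have hconn : IsConnected s := ⟨hne, hs.isPreconnected⟩
  refine Filter.EventuallyLE.antisymm ?_
    (hconn.Ioo_csInf_csSup_subset hbdd.bddBelow hbdd.bddAbove).eventuallyLE
  exact (subset_Icc_csInf_csSup hbdd.bddBelow hbdd.bddAbove).eventuallyLE.trans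
    Ioo_ae_eq_Icc.symm.le

theorem csSup_add_csSup_le_two_mul {s t u : Set ℝ} (hs : s.Nonempty) (ht : t.Nonempty)
    (hu : BddAbove u) (hmid : ∀ x ∈ s, ∀ y ∈ t, (x + y) / 2 ∈ u) :
    sSup s + sSup t ≤ 2 * sSup u := by
  rw [← le_sub_iff_add_le]
  refine csSup_le hs fun x hx ↦ ?_
  rw [le_sub_comm]
  refine csSup_le ht fun y hy ↦ ?_
  linarith [le_csSup hu (hmid x hx y hy)]

theorem two_mul_csInf_le_csInf_add_csInf {s t u : Set ℝ} (hs : s.Nonempty) (ht : t.Nonempty)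
    (hu : BddBelow u) (hmid : ∀ x ∈ s, ∀ y ∈ t, (x + y) / 2 ∈ u) :
    2 * sInf u ≤ sInf s + sInf t := by
  rw [← sub_le_iff_le_add]
  refine le_csInf hs fun x hx ↦ ?_
  rw [sub_le_comm]
  refine le_csInf ht fun y hy ↦ ?_
  linarith [csInf_le hu (hmid x hx y hy)]

variable {s t u : Set ℝ} {x y : ℝ}

theorem volume_inter_preimage_add_right (hs : Convex ℝ s) (ht : Convex ℝ t)
    (hs₀ : s.Nonempty) (ht₀ : t.Nonempty) (hsb : Bornology.IsBounded s)
    (htb : Bornology.IsBounded t) (x : ℝ) :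
    volume (s ∩ (· + x) ⁻¹' t) =
      ENNReal.ofReal (min (sSup s) (sSup t - x) - max (sInf s) (sInf t - x)) := by
  have hpre := (measurePreserving_add_right volume x).quasiMeasurePreserving.preimage_ae_eq
    (ae_eq_Ioo_csInf_csSup_of_convex ht ht₀ htb)
  rw [measure_congr ((ae_eq_Ioo_csInf_csSup_of_convex hs hs₀ hsb).inter hpre),
    preimage_add_const_Ioo, Ioo_inter_Ioo, Real.volume_Ioo]

theorem volume_inter_preimage_add_right_of_nonneg (hs : Convex ℝ s) (ht : Convex ℝ t)
    (ht₀ : t.Nonempty) (hsb : Bornology.IsBounded s) (hts : t ⊆ s) (hx : 0 ≤ x) :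
    volume (s ∩ (· + x) ⁻¹' t) =
      ENNReal.ofReal (sSup t - sInf s - max (sInf t - sInf s) x) := by
  have hsup : sSup t - x ≤ sSup s := by linarith [csSup_le_csSup hsb.bddAbove ht₀ hts]
  rw [volume_inter_preimage_add_right hs ht (ht₀.mono hts) ht₀ hsb (hsb.subset hts),
    min_eq_right hsup]
  congr 1
  grind

theorem volume_inter_preimage_add_right_of_nonpos (hs : Convex ℝ s) (ht : Convex ℝ t)
    (ht₀ : t.Nonempty) (hsb : Bornology.IsBounded s) (hts : t ⊆ s) (hx : x ≤ 0) :
    volume (s ∩ (· + x) ⁻¹' t) =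
      ENNReal.ofReal (sSup s - sInf t - max (sSup s - sSup t) (-x)) := by
  have hinf : sInf s ≤ sInf t - x := by linarith [csInf_le_csInf hsb.bddBelow ht₀ hts]
  rw [volume_inter_preimage_add_right hs ht (ht₀.mono hts) ht₀ hsb (hsb.subset hts),
    max_eq_right hinf]
  congr 1
  grind

theorem volume_inter_preimage_add_right_anti (hs : Convex ℝ s) (ht : Convex ℝ t)
    (hsb : Bornology.IsBounded s) (hts : t ⊆ s) (hxy : x ∈ uIcc 0 y) :
    volume (s ∩ (· + y) ⁻¹' t) ≤ volume (s ∩ (· + x) ⁻¹' t) := by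
  rcases t.eq_empty_or_nonempty with rfl | ht₀
  · simp
  rcases mem_uIcc.1 hxy with ⟨hx, hxy⟩ | ⟨hyx, hx⟩
  · rw [volume_inter_preimage_add_right_of_nonneg hs ht ht₀ hsb hts hx,
      volume_inter_preimage_add_right_of_nonneg hs ht ht₀ hsb hts (hx.trans hxy)]
    gcongr
  · rw [volume_inter_preimage_add_right_of_nonpos hs ht ht₀ hsb hts hx,
      volume_inter_preimage_add_right_of_nonpos hs ht ht₀ hsb hts (hyx.trans hx)]
    gcongr

/- `ofReal (β - max α x)` is the length of `(α, β) ∩ (x, ∞)`, so the inequality says that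
`(α', β') ∩ (2 * x, 2 * y)` is no longer than its superset `(2 * α, 2 * β) ∩ (2 * x, 2 * y)`. -/
theorem two_mul_ofReal_sub_max_add_le {α β α' β' : ℝ} (hα : 2 * α ≤ α') (hβ : β' ≤ 2 * β)
    (hxy : x ≤ y) :
    2 * ENNReal.ofReal (β - max α y) + ENNReal.ofReal (β' - max α' (2 * x)) ≤
      2 * ENNReal.ofReal (β - max α x) + ENNReal.ofReal (β' - max α' (2 * y)) := by
  have hreal : 2 * max (β - max α y) 0 + max (β' - max α' (2 * x)) 0 ≤
      2 * max (β - max α x) 0 + max (β' - max α' (2 * y)) 0 := by grind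
  have h := ENNReal.ofReal_le_ofReal hreal
  rw [ENNReal.ofReal_add (by positivity) (by positivity),
    ENNReal.ofReal_add (by positivity) (by positivity)] at h
  simpa [ENNReal.ofReal_mul, ENNReal.ofReal_max] using h

theorem two_mul_volume_inter_add_le (hs : Convex ℝ s) (hu : Convex ℝ u) (ht : Convex ℝ t)
    (hsb : Bornology.IsBounded s) (hus : u ⊆ s) (hts : t ⊆ s)
    (hmid : ∀ p ∈ s, ∀ q ∈ t, (p + q) / 2 ∈ u) (hxy : x ∈ uIcc 0 y) :
    2 * volume (s ∩ (· + y) ⁻¹' u) + volume (s ∩ (· + 2 * x) ⁻¹' t) ≤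
      2 * volume (s ∩ (· + x) ⁻¹' u) + volume (s ∩ (· + 2 * y) ⁻¹' t) := by
  rcases t.eq_empty_or_nonempty with rfl | ht₀
  · simpa using mul_le_mul_right (volume_inter_preimage_add_right_anti hs hu hsb hus hxy) 2
  have hs₀ : s.Nonempty := ht₀.mono hts
  have hu₀ : u.Nonempty := by
    obtain ⟨q, hq⟩ := ht₀
    exact ⟨_, hmid q (hts hq) q hq⟩
  have hle : sInf s ≤ sSup s := csInf_le_csSup hs₀ hsb.bddBelow hsb.bddAbove
  have hsup := csSup_add_csSup_le_two_mul hs₀ ht₀ (hsb.subset hus).bddAbove hmid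
  have hinf := two_mul_csInf_le_csInf_add_csInf hs₀ ht₀ (hsb.subset hus).bddBelow hmid
  rcases mem_uIcc.1 hxy with ⟨hx, hxy⟩ | ⟨hyx, hx⟩
  · have hvol {w : Set ℝ} (hw : Convex ℝ w) (hw₀ : w.Nonempty) (hws : w ⊆ s) {z : ℝ}
        (hz : 0 ≤ z) := volume_inter_preimage_add_right_of_nonneg hs hw hw₀ hsb hws hz
    rw [hvol hu hu₀ hus (hx.trans hxy), hvol ht ht₀ hts (by linarith), hvol hu hu₀ hus hx,
      hvol ht ht₀ hts (by linarith)]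
    exact two_mul_ofReal_sub_max_add_le (by linarith) (by linarith) hxy
  · have hvol {w : Set ℝ} (hw : Convex ℝ w) (hw₀ : w.Nonempty) (hws : w ⊆ s) {z : ℝ}
        (hz : z ≤ 0) := volume_inter_preimage_add_right_of_nonpos hs hw hw₀ hsb hws hz
    rw [hvol hu hu₀ hus (hyx.trans hx), hvol ht ht₀ hts (by linarith), hvol hu hu₀ hus hx,
      hvol ht ht₀ hts (by linarith), ← mul_neg, ← mul_neg]
    exact two_mul_ofReal_sub_max_add_le (by linarith) (by linarith) (neg_le_neg hyx)

end Interval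

section Overlap

variable {K : ℝ → ℝ}

/-- The autocorrelation of `K` at lag `s`. -/
noncomputable def autocorrelation (K : ℝ → ℝ) (s : ℝ) : ℝ := ∫ t, K t * K (t + s)

/-- The overlap of the superlevel set of `K` at height `y` with the one at height `y + h`, the
latter translated by `-s`. -/
noncomputable def layerOverlap (K : ℝ → ℝ) (y h s : ℝ) : ℝ≥0∞ :=
  volume {t | y < K t ∧ y + h < K (t + s)}

/-- The part of the autocorrelation of `K` at lag `s` that comes from pairs of heights `y < z`,
parametrized by `y` and the gap `h = z - y` so that the gap can be rescaled. -/
noncomputable def orderedOverlap (K : ℝ → ℝ) (s : ℝ) : ℝ≥0∞ :=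
  ∫⁻ y in Ioi (0 : ℝ), ∫⁻ h in Ioi (0 : ℝ), layerOverlap K y h s

theorem Cab_eq_autocorrelation (K : ℝ → ℝ) (a δ : ℝ) :
    Cab K a δ = autocorrelation K (2 * a * δ) := by
  rw [Cab, autocorrelation, ← integral_sub_right_eq_self (fun t ↦ K t * K (t + 2 * a * δ)) (a * δ)]
  congr! 3
  ring_nf

theorem Cfun_eq_autocorrelation (K : ℝ → ℝ) (δ : ℝ) :
    Cfun K δ = 3 / 2 * autocorrelation K 0 - 2 * autocorrelation K δ +
      1 / 2 * autocorrelation K (2 * δ) := by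
  simp only [Cfun, Cab_eq_autocorrelation]
  norm_num

theorem autocorrelation_nonneg (hK₀ : ∀ t, 0 ≤ K t) (s : ℝ) : 0 ≤ autocorrelation K s :=
  integral_nonneg fun t ↦ mul_nonneg (hK₀ t) (hK₀ (t + s))

theorem volume_superlevel_eq_layerOverlap_neg (K : ℝ → ℝ) (y h s : ℝ) :
    volume {t | y + h < K t ∧ y < K (t + s)} = layerOverlap K y h (-s) := by
  rw [layerOverlap, ← measure_preimage_add_right volume (-s)]
  congr 1
  ext t
  simp [and_comm]

theorem measurable_volume_superlevel (hK : Measurable K) (s : ℝ) :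
    Measurable fun p : ℝ × ℝ ↦ volume {t | p.1 < K t ∧ p.2 < K (t + s)} := by
  have hleft : MeasurableSet {q : (ℝ × ℝ) × ℝ | q.1.1 < K q.2} :=
    measurableSet_lt (by fun_prop) (by fun_prop)
  have hright : MeasurableSet {q : (ℝ × ℝ) × ℝ | q.1.2 < K (q.2 + s)} :=
    measurableSet_lt (by fun_prop) (by fun_prop)
  exact measurable_measure_prodMk_left (hleft.inter hright)

theorem measurable_layerOverlap (hK : Measurable K) (s : ℝ) :
    Measurable fun p : ℝ × ℝ ↦ layerOverlap K p.1 p.2 s :=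
  (measurable_volume_superlevel hK s).comp (by fun_prop : Measurable fun p : ℝ × ℝ ↦
    (p.1, p.1 + p.2))

theorem ofReal_autocorrelation {s : ℝ} (hK₀ : ∀ t, 0 ≤ K t) (hK : Measurable K)
    (hint : Integrable fun t ↦ K t * K (t + s)) :
    ENNReal.ofReal (autocorrelation K s) = orderedOverlap K s + orderedOverlap K (-s) := by
  rw [autocorrelation, ofReal_integral_eq_lintegral_ofReal hint
    (.of_forall fun t ↦ mul_nonneg (hK₀ t) (hK₀ (t + s)))]
  simp_rw [ENNReal.ofReal_mul (hK₀ _)]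
  rw [lintegral_ofReal_mul_ofReal_eq_lintegral_meas_lt hK₀ (fun t ↦ hK₀ (t + s)) hK (by fun_prop),
    lintegral_lintegral_Ioi_zero_eq_add_swap
      (F := fun y z ↦ volume {t | y < K t ∧ z < K (t + s)}) (measurable_volume_superlevel hK s)]
  simp only [volume_superlevel_eq_layerOverlap_neg]
  rfl

theorem orderedOverlap_eq_two_mul (K : ℝ → ℝ) (s : ℝ) :
    orderedOverlap K s =
      2 * ∫⁻ y in Ioi (0 : ℝ), ∫⁻ h in Ioi (0 : ℝ), layerOverlap K y (2 * h) s := by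
  rw [orderedOverlap, ← lintegral_const_mul' _ _ ENNReal.ofNat_ne_top]
  refine lintegral_congr fun y ↦ ?_
  rw [setLIntegral_Ioi_zero_eq_mul_comp_mul_left _ two_pos, ENNReal.ofReal_ofNat]

end Overlap

section Concave

variable {K : ℝ → ℝ} {b c : ℝ}

theorem superlevel_eq_sep {y : ℝ} (hsupp : Function.support K ⊆ Icc b c) (hy : 0 ≤ y) :
    {t | y < K t} = {t ∈ Icc b c | y < K t} := by
  ext t
  exact ⟨fun ht ↦ ⟨hsupp (hy.trans_lt ht).ne', ht⟩, And.right⟩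

theorem convex_superlevel {y : ℝ} (hsupp : Function.support K ⊆ Icc b c)
    (hconc : ConcaveOn ℝ (Icc b c) K) (hy : 0 ≤ y) : Convex ℝ {t | y < K t} := by
  rw [superlevel_eq_sep hsupp hy]
  exact hconc.convex_gt y

theorem isBounded_superlevel {y : ℝ} (hsupp : Function.support K ⊆ Icc b c) (hy : 0 ≤ y) :
    Bornology.IsBounded {t | y < K t} := by
  rw [superlevel_eq_sep hsupp hy]
  exact (Metric.isBounded_Icc b c).subset (sep_subset _ _)

theorem midpoint_mem_superlevel {y z p q : ℝ} (hsupp : Function.support K ⊆ Icc b c)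
    (hconc : ConcaveOn ℝ (Icc b c) K) (hy : 0 ≤ y) (hz : 0 ≤ z) (hp : y < K p) (hq : z < K q) :
    (y + z) / 2 < K ((p + q) / 2) := by
  have h := hconc.2 (hsupp (hy.trans_lt hp).ne') (hsupp (hz.trans_lt hq).ne')
    (by norm_num : (0 : ℝ) ≤ 1 / 2) (by norm_num : (0 : ℝ) ≤ 1 / 2) (by norm_num)
  simp only [smul_eq_mul, ← mul_add] at h
  rw [div_eq_inv_mul, div_eq_inv_mul, ← one_div]
  linarith

theorem measurable_of_concaveOn (hK₀ : ∀ t, 0 ≤ K t) (hsupp : Function.support K ⊆ Icc b c)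
    (hconc : ConcaveOn ℝ (Icc b c) K) : Measurable K := by
  refine measurable_of_Ioi fun y ↦ ?_
  rcases lt_or_ge y 0 with hy | hy
  · have huniv : K ⁻¹' Ioi y = univ := eq_univ_of_forall fun t ↦ hy.trans_le (hK₀ t)
    exact huniv ▸ .univ
  · exact (convex_superlevel hsupp hconc hy).ordConnected.measurableSet

theorem le_two_mul_apply_midpoint (hK₀ : ∀ t, 0 ≤ K t) (hsupp : Function.support K ⊆ Icc b c)
    (hconc : ConcaveOn ℝ (Icc b c) K) (t : ℝ) : K t ≤ 2 * K ((b + c) / 2) := by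
  by_cases ht : t ∈ Icc b c
  · have h := hconc.2 ht (show b + c - t ∈ Icc b c from ⟨by linarith [ht.2], by linarith [ht.1]⟩)
      (by norm_num : (0 : ℝ) ≤ 1 / 2) (by norm_num : (0 : ℝ) ≤ 1 / 2) (by norm_num)
    have hcenter : (1 / 2 : ℝ) • t + (1 / 2 : ℝ) • (b + c - t) = (b + c) / 2 := by
      simp only [smul_eq_mul]
      ring
    rw [hcenter, smul_eq_mul, smul_eq_mul] at h
    linarith [hK₀ (b + c - t)]
  · rw [Function.notMem_support.1 fun h ↦ ht (hsupp h)]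
    linarith [hK₀ ((b + c) / 2)]

theorem integrable_mul_comp_add_right_of_concaveOn (hK₀ : ∀ t, 0 ≤ K t)
    (hsupp : Function.support K ⊆ Icc b c) (hconc : ConcaveOn ℝ (Icc b c) K) (s : ℝ) :
    Integrable fun t ↦ K t * K (t + s) := by
  have hK : Measurable K := measurable_of_concaveOn hK₀ hsupp hconc
  have hbound (t : ℝ) : ‖K t‖ ≤ 2 * K ((b + c) / 2) := by
    rw [Real.norm_of_nonneg (hK₀ t)]
    exact le_two_mul_apply_midpoint hK₀ hsupp hconc t
  have hint : Integrable K := (integrableOn_iff_integrable_of_support_subset hsupp).1 <|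
    Measure.integrableOn_of_bounded measure_Icc_lt_top.ne hK.aestronglyMeasurable
      (.of_forall hbound)
  exact hint.mul_bdd (hK.comp (measurable_add_const s)).aestronglyMeasurable
    (.of_forall fun t ↦ hbound (t + s))

theorem two_mul_layerOverlap_add_le {y h s t : ℝ} (hsupp : Function.support K ⊆ Icc b c)
    (hconc : ConcaveOn ℝ (Icc b c) K) (hy : 0 ≤ y) (hh : 0 ≤ h) (hst : s ∈ uIcc 0 t) :
    2 * layerOverlap K y h t + layerOverlap K y (2 * h) (2 * s) ≤
      2 * layerOverlap K y h s + layerOverlap K y (2 * h) (2 * t) := by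
  have hconv {z : ℝ} (hz : 0 ≤ z) := convex_superlevel hsupp hconc hz
  have hmid (p) (hp : y < K p) (q) (hq : y + 2 * h < K q) : y + h < K ((p + q) / 2) := by
    convert midpoint_mem_superlevel hsupp hconc hy (by positivity) hp hq using 1
    ring
  exact two_mul_volume_inter_add_le (hconv hy) (hconv (by positivity)) (hconv (by positivity))
    (isBounded_superlevel hsupp hy) (fun p (hp : y + h < K p) ↦ show y < K p by linarith)
    (fun p (hp : y + 2 * h < K p) ↦ show y < K p by linarith) hmid hst

theorem four_mul_orderedOverlap_add_le {s t : ℝ} (hK₀ : ∀ t, 0 ≤ K t)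
    (hsupp : Function.support K ⊆ Icc b c) (hconc : ConcaveOn ℝ (Icc b c) K)
    (hst : s ∈ uIcc 0 t) :
    4 * orderedOverlap K t + orderedOverlap K (2 * s) ≤
      4 * orderedOverlap K s + orderedOverlap K (2 * t) := by
  have hmeas (r : ℝ) := measurable_layerOverlap (measurable_of_concaveOn hK₀ hsupp hconc) r
  have hadd (r r' : ℝ) : 4 * orderedOverlap K r + orderedOverlap K (2 * r') =
      2 * ∫⁻ y in Ioi (0 : ℝ), ∫⁻ h in Ioi (0 : ℝ),
        (2 * layerOverlap K y h r + layerOverlap K y (2 * h) (2 * r')) := by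
    have hinner (y : ℝ) : Measurable fun h ↦ 2 * layerOverlap K y h r :=
      ((hmeas r).comp measurable_prodMk_left).const_mul 2
    have houter : Measurable fun y ↦ ∫⁻ h in Ioi (0 : ℝ), 2 * layerOverlap K y h r :=
      ((hmeas r).const_mul 2).lintegral_prod_right'
    simp_rw [lintegral_add_left (hinner _)]
    rw [lintegral_add_left houter]
    simp_rw [lintegral_const_mul' _ _ ENNReal.ofNat_ne_top]
    rw [orderedOverlap_eq_two_mul K (2 * r'), orderedOverlap, mul_add, ← mul_assoc]
    norm_num
  rw [hadd, hadd]
  gcongr 2 * ?_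
  refine setLIntegral_mono' measurableSet_Ioi fun y (hy : 0 < y) ↦ ?_
  refine setLIntegral_mono' measurableSet_Ioi fun h (hh : 0 < h) ↦ ?_
  exact two_mul_layerOverlap_add_le hsupp hconc hy.le hh.le hst

theorem four_mul_autocorrelation_add_le {s t : ℝ} (hK₀ : ∀ t, 0 ≤ K t)
    (hsupp : Function.support K ⊆ Icc b c) (hconc : ConcaveOn ℝ (Icc b c) K)
    (hst : s ∈ uIcc 0 t) :
    4 * autocorrelation K t + autocorrelation K (2 * s) ≤
      4 * autocorrelation K s + autocorrelation K (2 * t) := by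
  have hA₀ (r : ℝ) : 0 ≤ autocorrelation K r := autocorrelation_nonneg hK₀ r
  have hA (r : ℝ) : ENNReal.ofReal (autocorrelation K r) =
      orderedOverlap K r + orderedOverlap K (-r) :=
    ofReal_autocorrelation hK₀ (measurable_of_concaveOn hK₀ hsupp hconc)
      (integrable_mul_comp_add_right_of_concaveOn hK₀ hsupp hconc r)
  have hofReal (r r' : ℝ) : ENNReal.ofReal (4 * autocorrelation K r + autocorrelation K (2 * r')) =
      (4 * orderedOverlap K r + orderedOverlap K (2 * r')) +
        (4 * orderedOverlap K (-r) + orderedOverlap K (2 * -r')) := by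
    rw [ENNReal.ofReal_add (by linarith [hA₀ r]) (hA₀ _), ENNReal.ofReal_mul zero_le_four, hA, hA,
      ENNReal.ofReal_ofNat, mul_neg]
    ring
  have hneg : -s ∈ uIcc 0 (-t) := by
    rw [← neg_zero, ← image_neg_uIcc]
    exact mem_image_of_mem _ hst
  rw [← ENNReal.ofReal_le_ofReal_iff (by linarith [hA₀ s, hA₀ (2 * t)]), hofReal, hofReal]
  exact add_le_add (four_mul_orderedOverlap_add_le hK₀ hsupp hconc hst)
    (four_mul_orderedOverlap_add_le hK₀ hsupp hconc hneg)

theorem statement2_general (hK₀ : ∀ t, 0 ≤ K t) (hsupp : Function.support K ⊆ Icc b c)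
    (hconc : ConcaveOn ℝ (Icc b c) K) : MonotoneOn (Cfun K) (Ici 0) := by
  intro s hs t _ hst
  have h := four_mul_autocorrelation_add_le hK₀ hsupp hconc (mem_uIcc_of_le hs hst)
  rw [Cfun_eq_autocorrelation, Cfun_eq_autocorrelation]
  linarith

end Concave

/-- Proposition 1(b): if moreover `K` is continuous, has support `[−a, a]` (for some `a > 0`),
is concave on `[−a, a]`, and attains its maximum at a unique point, then `δ ↦ C(δ)` is
nondecreasing on `(0, ∞)`. -/
theorem statement2 (K : ℝ → ℝ) (hK : AssumptionCK K) (hKcont : Continuous K)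
    (a : ℝ) (ha : 0 < a) (hsupp : tsupport K = Set.Icc (-a) a)
    (hconc : ConcaveOn ℝ (Set.Icc (-a) a) K)
    (hmax : ∃! u : ℝ, ∀ v : ℝ, K v ≤ K u) :
    MonotoneOn (Cfun K) (Set.Ioi (0 : ℝ)) := by
  obtain ⟨-, hK₀, -, -, -⟩ := hK
  exact (statement2_general hK₀ ((subset_tsupport K).trans hsupp.subset) hconc).mono
    Ioi_subset_Ici_self
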